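/- arXiv:2108.00711 — 3 statements merged into one kernel-verified Lean document; each statement's English description precedes it below -/
import Mathlib

section
/- In the Nehari setting, let Ψ be the restriction to the unit sphere S = {w ∈ H¹(V) : ‖w‖ = 1} of Ψ̂(w) = Φ(m̂(w)), where m̂(w) = s_w w and m = m̂|_S. Then Ψ is C¹ on S (as a Banach submanifold of H¹(V)) and Ψ'(w)z = ‖m(w)‖ · Φ'(m(w))z for all w ∈ S and all z in the tangent space T_wS = {z ∈ H¹(V) : ⟨w,z⟩ = 0}. -/
open scoped ENNReal

noncomputable section

/-- `H¹(V)`: as a set, the ℓ²-summable real functions on the vertex set;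
the `H¹` norm is equivalent to the ℓ² norm by the uniform degree bound. -/
abbrev H1 (Vtx : Type*) := lp (fun _ : Vtx => ℝ) 2

variable {Vtx : Type*}

/-- `Γ(u,v)(x) = (1/2) Σ_{y∼x} (u(y)-u(x))(v(y)-v(x))`. -/
def gammaProd (adj : Vtx → Vtx → Prop) (u v : Vtx → ℝ) (x : Vtx) : ℝ :=
  (1/2) * ∑' y : {y : Vtx // adj x y}, (u y.1 - u x) * (v y.1 - v x)

/-- `|∇u|²(x) = (1/2) Σ_{y∼x} (u(y)-u(x))²`. -/
def gradSq (adj : Vtx → Vtx → Prop) (u : Vtx → ℝ) (x : Vtx) : ℝ :=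
  gammaProd adj u u x

/-- `Δu(x) = Σ_{y∼x} (u(y)-u(x))`. -/
def graphLap (adj : Vtx → Vtx → Prop) (u : Vtx → ℝ) (x : Vtx) : ℝ :=
  ∑' y : {y : Vtx // adj x y}, (u y.1 - u x)

/-- the norm `‖u‖` induced by the potential `V`:
`‖u‖² = Σ_x (|∇u|²(x) + V(x)u(x)²)`. -/
def nrmV (adj : Vtx → Vtx → Prop) (Vp : Vtx → ℝ) (u : Vtx → ℝ) : ℝ :=
  Real.sqrt (∑' x, (gradSq adj u x + Vp x * (u x)^2))

/-- the `V`-norm of an element of `H¹`. -/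
def nrmH (adj : Vtx → Vtx → Prop) (Vp : Vtx → ℝ) (u : H1 Vtx) : ℝ :=
  nrmV adj Vp (fun y => u y)

/-- `⟨u,v⟩ = Σ_x (Γ(u,v)(x) + V(x)u(x)v(x))`. -/
def iprodH (adj : Vtx → Vtx → Prop) (Vp : Vtx → ℝ) (u v : H1 Vtx) : ℝ :=
  ∑' x, (gammaProd adj (fun y => u y) (fun y => v y) x + Vp x * u x * v x)

/-- the variational functional `Φ(u) = ½‖u‖² − Σ_x F(x,u(x))`. -/
def PhiF (adj : Vtx → Vtx → Prop) (Vp : Vtx → ℝ) (F : Vtx → ℝ → ℝ) (u : H1 Vtx) : ℝ :=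
  (1/2) * ∑' x, (gradSq adj (fun y => u y) x + Vp x * (u x)^2) - ∑' x, F x (u x)

/-- the Nehari manifold `N = {u ∈ H¹\{0} : Φ'(u)u = 0}`. -/
def Nehari (adj : Vtx → Vtx → Prop) (Vp : Vtx → ℝ) (F : Vtx → ℝ → ℝ) : Set (H1 Vtx) :=
  {u | u ≠ 0 ∧ fderiv ℝ (PhiF adj Vp F) u u = 0}

/-- adjacency of the lattice graph `ℤ^N`. -/
def adjZ (N : ℕ) (x y : Fin N → ℤ) : Prop := (∑ i, (x i - y i).natAbs) = 1

end

section helpers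
open Filter Topology Asymptotics

section partB
variable {X : Type*}

theorem l2_summable_sq (u : H1 X) : Summable fun x => (u x)^2 := by
  have := lp.summable_inner (𝕜 := ℝ) u u
  simpa [sq] using this

theorem l2_norm_sq (u : H1 X) : ‖u‖^2 = ∑' x, (u x)^2 := by
  rw [← real_inner_self_eq_norm_sq, lp.inner_eq_tsum]
  simp [sq]

theorem l2_mem {g : X → ℝ} (h : Summable fun x => (g x)^2) :
    Memℓp (E := fun _ : X => ℝ) g 2 := by
  apply memℓp_gen
  simpa using h

theorem l2_small (u : H1 X) (δ : ℝ) (hδ : 0 < δ) : ∀ᶠ x in cofinite, |u x| < δ := by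
  have h := (l2_summable_sq u).tendsto_cofinite_zero
  have h2 := h.eventually (gt_mem_nhds (by positivity : (0:ℝ) < δ^2))
  filter_upwards [h2] with x hx
  exact abs_lt_of_sq_lt_sq hx hδ.le

theorem l2_apply_le (u : H1 X) (x : X) : |u x| ≤ ‖u‖ := by
  have := lp.norm_apply_le_norm (p := 2) (by simp) u x
  simpa using this

theorem l2_apply_cont (x : X) : Continuous fun u : H1 X => u x :=
  (lp.evalCLM ℝ (fun _ : X => ℝ) 2 x).continuous

variable (f : X → ℝ → ℝ)

theorem f_zero (hcont : ∀ x, Continuous (f x))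
    (hsmall : ∀ ε > 0, ∃ δ > 0, ∀ x t, t ≠ 0 → |t| < δ → |f x t| ≤ ε * |t|) (x : X) :
    f x 0 = 0 := by
  have h1 : Tendsto (f x) (𝓝[≠] 0) (𝓝 (f x 0)) :=
    (hcont x).continuousAt.tendsto.mono_left nhdsWithin_le_nhds
  have h2 : Tendsto (f x) (𝓝[≠] 0) (𝓝 0) := by
    obtain ⟨δ, hδ, h⟩ := hsmall 1 one_pos
    have h3 : Tendsto (fun t : ℝ => |t|) (𝓝[≠] 0) (𝓝 0) := by
      have := (continuous_abs (G := ℝ)).tendsto 0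
      rw [abs_zero] at this
      exact this.mono_left nhdsWithin_le_nhds
    refine squeeze_zero_norm' ?_ h3
    filter_upwards [self_mem_nhdsWithin, h3.eventually (gt_mem_nhds hδ)] with t ht ht2
    simpa using h x t ht ht2
  exact tendsto_nhds_unique h1 h2

theorem f_mem
    (hs : ∀ ε > 0, ∃ δ > 0, ∀ x t, |t| < δ → |f x t| ≤ ε * |t|) (u : H1 X) :
    Memℓp (E := fun _ : X => ℝ) (fun x => f x (u x)) 2 := by
  apply l2_mem
  obtain ⟨δ, hδ, h⟩ := hs 1 one_pos
  refine Summable.of_norm_bounded_eventually (l2_summable_sq u) ?_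
  filter_upwards [l2_small u δ hδ] with x hx
  have := h x _ hx
  rw [one_mul] at this
  simpa using sq_le_sq.2 this

/-- The Nemytskii operator. -/
noncomputable def nem
    (hs : ∀ ε > 0, ∃ δ > 0, ∀ x t, |t| < δ → |f x t| ≤ ε * |t|) (u : H1 X) : H1 X :=
  ⟨fun x => f x (u x), f_mem f hs u⟩

theorem nem_apply
    (hs : ∀ ε > 0, ∃ δ > 0, ∀ x t, |t| < δ → |f x t| ≤ ε * |t|) (u : H1 X) (x : X) :
    nem f hs u x = f x (u x) := rfl

theorem nem_continuous (hcont : ∀ x, Continuous (f x))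
    (hs : ∀ ε > 0, ∃ δ > 0, ∀ x t, |t| < δ → |f x t| ≤ ε * |t|) :
    Continuous (nem f hs) := by
  classical
  rw [continuous_iff_continuousAt]
  intro u
  have key : Tendsto (fun v => ‖nem f hs v - nem f hs u‖^2) (𝓝 u) (𝓝 0) := by
    refine tendsto_order.2 ⟨fun b hb => Eventually.of_forall fun v => hb.trans_le (by positivity),
      fun η hη => ?_⟩
    set K := 2 * (2 * ‖u‖^2 + 1) with hK
    have hKpos : 0 < K := by positivity
    obtain ⟨ε, hε, hεK⟩ : ∃ ε : ℝ, 0 < ε ∧ ε^2 * K ≤ η / 2 := by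
      refine ⟨Real.sqrt (η / 2 / K), Real.sqrt_pos.2 (by positivity), ?_⟩
      rw [Real.sq_sqrt (by positivity), div_mul_cancel₀ _ hKpos.ne']
    obtain ⟨δ, hδ, h⟩ := hs ε hε
    have hA := l2_small u (δ/2) (by positivity)
    rw [eventually_cofinite] at hA
    set A := hA.toFinset with hAdef
    have hS : Tendsto (fun v : H1 X => ∑ x ∈ A, (f x (v x) - f x (u x))^2) (𝓝 u) (𝓝 0) := by
      have hc : Continuous (fun v : H1 X => ∑ x ∈ A, (f x (v x) - f x (u x))^2) :=
        continuous_finsetSum _ fun x _ =>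
          (((hcont x).comp (l2_apply_cont x)).sub continuous_const).pow 2
      have := hc.tendsto u
      simpa using this
    have hN : ∀ᶠ v : H1 X in 𝓝 u, ‖v‖^2 < ‖u‖^2 + 1 :=
      ((continuous_norm (E := H1 X)).pow 2).continuousAt.eventually (gt_mem_nhds (by simp))
    filter_upwards [hS.eventually (gt_mem_nhds (half_pos hη)), hN,
      Metric.ball_mem_nhds u (half_pos hδ)] with v hv1 hv2 hv3
    rw [Metric.mem_ball, dist_eq_norm] at hv3
    have hsumA : HasSum (fun x => if x ∈ A then (f x (v x) - f x (u x))^2 else 0)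
        (∑ x ∈ A, (f x (v x) - f x (u x))^2) := by
      have : HasSum (fun x => if x ∈ A then (f x (v x) - f x (u x))^2 else 0)
        (∑ x ∈ A, if x ∈ A then (f x (v x) - f x (u x))^2 else 0) :=
        hasSum_sum_of_ne_finset_zero (fun x hx => if_neg hx)
      rwa [Finset.sum_congr rfl (fun x hx => if_pos hx)] at this
    have hu : HasSum (fun x => (u x)^2) (‖u‖^2) := l2_norm_sq u ▸ (l2_summable_sq u).hasSum
    have hv : HasSum (fun x => (v x)^2) (‖v‖^2) := l2_norm_sq v ▸ (l2_summable_sq v).hasSum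
    have hd : HasSum (fun x => ((nem f hs v - nem f hs u : H1 X) x)^2)
      (‖nem f hs v - nem f hs u‖^2) := l2_norm_sq (nem f hs v - nem f hs u) ▸
        (l2_summable_sq (nem f hs v - nem f hs u)).hasSum
    have hle := hasSum_le (fun x => ?_) hd (hsumA.add ((hu.add hv).mul_left (2 * ε^2)))
    · have h5 : 2 * ε^2 * (‖u‖^2 + ‖v‖^2) ≤ ε^2 * K := by
        rw [hK]
        have : 0 ≤ ε^2 := by positivity
        nlinarith
      linarith
    · rw [lp.coeFn_sub, Pi.sub_apply, nem_apply, nem_apply]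
      have hnn : 0 ≤ 2 * ε^2 * ((u x)^2 + (v x)^2) := by positivity
      by_cases hx : x ∈ A
      · simp only [hx, if_true]; linarith
      · simp only [hx, if_false, zero_add]
        have hux : |u x| < δ/2 := by
          by_contra hcon
          exact hx (by simpa [hAdef] using hcon)
        have hvx : |v x - u x| < δ/2 := by
          refine lt_of_le_of_lt ?_ hv3
          have := l2_apply_le (v - u) x
          simpa using this
        have hvx2 : |v x| < δ := by
          have : |v x| ≤ |v x - u x| + |u x| := by
            simpa using abs_add_le (v x - u x) (u x)
          linarith
        have b1 := h x _ hvx2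
        have b2 := h x (u x) (by linarith)
        have b3 : (f x (v x) - f x (u x))^2 ≤ (ε * |v x| + ε * |u x|)^2 := by
          rw [sq_le_sq]
          refine ((abs_sub _ _).trans (add_le_add b1 b2)).trans (le_abs_self _)
        refine b3.trans ?_
        rw [← sq_abs (u x), ← sq_abs (v x)]
        have : 0 ≤ ε^2 * (|v x| - |u x|)^2 := by positivity
        nlinarith
  rw [ContinuousAt, tendsto_iff_norm_sub_tendsto_zero]
  have := (Real.continuous_sqrt.tendsto 0).comp key
  simpa [Function.comp_def, Real.sqrt_sq] using this

theorem F_deriv (hcont : ∀ x, Continuous (f x))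
    (F : X → ℝ → ℝ) (hF : ∀ x t, F x t = ∫ s in (0:ℝ)..t, f x s) (x : X) (t : ℝ) :
    HasDerivAt (F x) (f x t) t := by
  have : F x = fun t => ∫ s in (0:ℝ)..t, f x s := funext (hF x)
  rw [this]
  exact (hcont x).integral_hasStrictDerivAt 0 t |>.hasDerivAt

theorem F_mvt (hcont : ∀ x, Continuous (f x))
    (F : X → ℝ → ℝ) (hF : ∀ x t, F x t = ∫ s in (0:ℝ)..t, f x s) (x : X) (s t : ℝ) :
    ∃ p, |p - s| ≤ |t - s| ∧ F x t - F x s = f x p * (t - s) := by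
  have hD := F_deriv f hcont F hF x
  have hC : Continuous (F x) := continuous_iff_continuousAt.2 fun s => (hD s).continuousAt
  rcases lt_trichotomy s t with h | h | h
  · obtain ⟨c, hc, he⟩ := exists_hasDerivAt_eq_slope _ _ h hC.continuousOn (fun x _ => hD x)
    refine ⟨c, ?_, ?_⟩
    · rw [abs_of_pos (by linarith [hc.1]), abs_of_pos (by linarith)]; linarith [hc.2]
    · rw [he, div_mul_cancel₀ _ (sub_pos.2 h).ne']
  · exact ⟨s, by simp, by simp [h]⟩
  · obtain ⟨c, hc, he⟩ := exists_hasDerivAt_eq_slope _ _ h hC.continuousOn (fun x _ => hD x)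
    refine ⟨c, ?_, ?_⟩
    · rw [abs_of_neg (by linarith [hc.2]), abs_of_neg (by linarith)]; linarith [hc.1]
    · have := (sub_pos.2 h).ne'
      rw [he]; field_simp; ring

theorem J_mvt (hcont : ∀ x, Continuous (f x))
    (F : X → ℝ → ℝ) (hF : ∀ x t, F x t = ∫ s in (0:ℝ)..t, f x s)
    (hs : ∀ ε > 0, ∃ δ > 0, ∀ x t, |t| < δ → |f x t| ≤ ε * |t|) (u v : H1 X) :
    ∃ p : H1 X, ‖p - u‖ ≤ ‖v - u‖ ∧
      HasSum (fun x => F x (v x) - F x (u x)) (inner ℝ (nem f hs p) (v - u)) := by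
  choose p hp1 hp2 using fun x => F_mvt f hcont F hF x (u x) (v x)
  have hm : Memℓp (E := fun _ : X => ℝ) (fun x => p x - u x) 2 := by
    apply l2_mem
    refine Summable.of_nonneg_of_le (fun x => sq_nonneg _) (fun x => ?_) (l2_summable_sq (v - u))
    simpa using sq_le_sq.2 (hp1 x)
  let d : H1 X := ⟨fun x => p x - u x, hm⟩
  have hdx : ∀ x, d x = p x - u x := fun x => rfl
  refine ⟨u + d, ?_, ?_⟩
  · rw [add_sub_cancel_left]
    refine le_of_sq_le_sq ?_ (norm_nonneg _)
    rw [l2_norm_sq, l2_norm_sq]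
    refine (l2_summable_sq d).tsum_le_tsum (fun x => ?_) (l2_summable_sq (v - u))
    simpa [hdx] using sq_le_sq.2 (hp1 x)
  · have := lp.hasSum_inner (𝕜 := ℝ) (nem f hs (u + d)) (v - u)
    have e : (fun x => F x (v x) - F x (u x)) =
        fun x => inner ℝ ((nem f hs (u + d)) x) ((v - u) x) := by
      funext x
      rw [nem_apply, hp2 x]
      simp [hdx, mul_comm]
    rw [e]
    exact this

theorem J_summable (hcont : ∀ x, Continuous (f x))
    (F : X → ℝ → ℝ) (hF : ∀ x t, F x t = ∫ s in (0:ℝ)..t, f x s)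
    (hs : ∀ ε > 0, ∃ δ > 0, ∀ x t, |t| < δ → |f x t| ≤ ε * |t|) (v : H1 X) :
    Summable fun x => F x (v x) := by
  obtain ⟨p, -, h⟩ := J_mvt f hcont F hF hs 0 v
  have := h.summable
  simpa [hF _ 0] using this

theorem J_hasFDerivAt (hcont : ∀ x, Continuous (f x))
    (F : X → ℝ → ℝ) (hF : ∀ x t, F x t = ∫ s in (0:ℝ)..t, f x s)
    (hs : ∀ ε > 0, ∃ δ > 0, ∀ x t, |t| < δ → |f x t| ≤ ε * |t|) (u : H1 X) :
    HasFDerivAt (fun u : H1 X => ∑' x, F x (u x)) (innerSL ℝ (nem f hs u)) u := by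
  rw [hasFDerivAt_iff_isLittleO, isLittleO_iff]
  intro c hc
  obtain ⟨δ, hδ, h⟩ := Metric.continuousAt_iff.1
    ((nem_continuous f hcont hs).continuousAt (x := u)) c hc
  filter_upwards [Metric.ball_mem_nhds u hδ] with v hv
  obtain ⟨p, hp, hsum⟩ := J_mvt f hcont F hF hs u v
  have e : ∑' x, F x (v x) - ∑' x, F x (u x) = inner ℝ (nem f hs p) (v - u) := by
    rw [← (J_summable f hcont F hF hs v).tsum_sub (J_summable f hcont F hF hs u), hsum.tsum_eq]
  rw [e, innerSL_apply_apply, ← inner_sub_left]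
  refine (norm_inner_le_norm _ _).trans ?_
  gcongr
  have := h (x := p) (by rw [dist_eq_norm]; exact hp.trans_lt (by simpa [dist_eq_norm] using hv))
  rw [dist_eq_norm] at this
  exact this.le
end partB

section partC
variable {E : Type*} [NormedAddCommGroup E] [NormedSpace ℝ E]

theorem nehari_hasDerivAt_ray {Φ : E → ℝ} {Φ' : E → E →L[ℝ] ℝ}
    (hd : ∀ u, HasFDerivAt Φ (Φ' u) u) (w : E) (s : ℝ) :
    HasDerivAt (fun s : ℝ => Φ (s • w)) (Φ' (s • w) w) s := by
  have h1 : HasDerivAt (fun s : ℝ => s • w) ((1:ℝ) • w) s := (hasDerivAt_id s).smul_const w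
  rw [one_smul] at h1
  exact (hd (s • w)).comp_hasDerivAt s h1

theorem nehari_max {Φ : E → ℝ} {Φ' : E → E →L[ℝ] ℝ}
    (hd : ∀ u, HasFDerivAt Φ (Φ' u) u) (w : E) (σ : ℝ)
    (hlt : ∀ s, 0 < s → s < σ → 0 < Φ' (s • w) w)
    (hgt : ∀ s, σ < s → Φ' (s • w) w < 0) (t : ℝ) (ht : 0 < t) :
    Φ (t • w) ≤ Φ (σ • w) := by
  have hD := nehari_hasDerivAt_ray hd w
  have hC : Continuous (fun s : ℝ => Φ (s • w)) :=
    continuous_iff_continuousAt.2 fun s => (hD s).continuousAt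
  rcases lt_trichotomy t σ with h | h | h
  · obtain ⟨c, hc, he⟩ := exists_hasDerivAt_eq_slope _ _ h hC.continuousOn (fun x _ => hD x)
    have h1 := hlt c (ht.trans hc.1) hc.2
    rw [he, lt_div_iff₀ (by linarith)] at h1
    linarith
  · rw [h]
  · obtain ⟨c, hc, he⟩ := exists_hasDerivAt_eq_slope _ _ h hC.continuousOn (fun x _ => hD x)
    have h1 := hgt c hc.1
    rw [he, div_lt_iff₀ (by linarith)] at h1
    linarith

theorem nehari_continuousAt {Φ' : E → E →L[ℝ] ℝ} (hc : Continuous Φ') (sw : E → ℝ)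
    (hpos : ∀ w, w ≠ 0 → 0 < sw w)
    (hlt : ∀ w, w ≠ 0 → ∀ s, 0 < s → s < sw w → 0 < Φ' (s • w) w)
    (hgt : ∀ w, w ≠ 0 → ∀ s, sw w < s → Φ' (s • w) w < 0) (w : E) (hw : w ≠ 0) :
    ContinuousAt sw w := by
  have hcs : ∀ s : ℝ, Continuous fun v : E => Φ' (s • v) v := fun s =>
    (hc.comp (continuous_const_smul s)).clm_apply continuous_id
  have hne : ∀ᶠ v in 𝓝 w, v ≠ 0 := isOpen_ne.mem_nhds hw
  refine tendsto_order.2 ⟨fun b hb => ?_, fun b hb => ?_⟩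
  · set c := max b (sw w / 2) with hcdef
    have hp := hpos w hw
    have hc0 : 0 < c := lt_max_of_lt_right (by linarith)
    have hc1 : c < sw w := max_lt hb (by linarith)
    have h1 : ∀ᶠ v in 𝓝 w, 0 < Φ' (c • v) v :=
      (hcs c).continuousAt.eventually (lt_mem_nhds (hlt w hw c hc0 hc1))
    filter_upwards [h1, hne] with v hv hv0
    by_contra hcon
    rw [not_lt] at hcon
    rcases (hcon.trans (le_max_left b (sw w / 2))).lt_or_eq with h | h
    · exact absurd (hgt v hv0 c h) (not_lt.2 hv.le)
    · have hb' : b = sw v := le_antisymm ((le_max_left b (sw w / 2)).trans h.symm.le) hcon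
      -- points above c give negative sign, yet positivity is open at c
      have h2 : ∀ᶠ s in 𝓝 c, 0 < Φ' (s • v) v := by
        have : Continuous fun s : ℝ => Φ' (s • v) v :=
          (hc.comp (continuous_id.smul continuous_const)).clm_apply continuous_const
        exact this.continuousAt.eventually (lt_mem_nhds hv)
      have h3 : ∀ᶠ s in 𝓝[>] c, 0 < Φ' (s • v) v := h2.filter_mono nhdsWithin_le_nhds
      obtain ⟨s, hs1, hs2⟩ := (h3.and self_mem_nhdsWithin).exists
      exact absurd (hgt v hv0 s (h.trans_lt hs2)) (not_lt.2 hs1.le)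
  · have hb0 : 0 < b := (hpos w hw).trans hb
    have h1 : ∀ᶠ v in 𝓝 w, Φ' (b • v) v < 0 :=
      (hcs b).continuousAt.eventually (gt_mem_nhds (hgt w hw b hb))
    filter_upwards [h1, hne] with v hv hv0
    by_contra hcon
    rw [not_lt] at hcon
    rcases hcon.lt_or_eq with h | h
    · exact absurd (hlt v hv0 b hb0 h) (not_lt.2 hv.le)
    · have h2 : ∀ᶠ s in 𝓝 b, Φ' (s • v) v < 0 := by
        have : Continuous fun s : ℝ => Φ' (s • v) v :=
          (hc.comp (continuous_id.smul continuous_const)).clm_apply continuous_const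
        exact this.continuousAt.eventually (gt_mem_nhds hv)
      have h3 : ∀ᶠ s in 𝓝[<] b, Φ' (s • v) v < 0 := h2.filter_mono nhdsWithin_le_nhds
      have h4 : ∀ᶠ s in 𝓝[<] b, 0 < s := (lt_mem_nhds hb0).filter_mono nhdsWithin_le_nhds
      obtain ⟨s, ⟨hs1, hs2⟩, hs3⟩ := ((h3.and h4).and self_mem_nhdsWithin).exists
      exact absurd (hlt v hv0 s hs2 (h ▸ hs3)) (not_lt.2 hs1.le)

theorem nehari_hasFDerivAt {Φ : E → ℝ} {Φ' : E → E →L[ℝ] ℝ}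
    (hd : ∀ u, HasFDerivAt Φ (Φ' u) u) (hc : Continuous Φ') (sw : E → ℝ)
    (hpos : ∀ w, w ≠ 0 → 0 < sw w)
    (hlt : ∀ w, w ≠ 0 → ∀ s, 0 < s → s < sw w → 0 < Φ' (s • w) w)
    (hgt : ∀ w, w ≠ 0 → ∀ s, sw w < s → Φ' (s • w) w < 0) (w : E) (hw : w ≠ 0) :
    HasFDerivAt (fun v => Φ (sw v • v)) (sw w • Φ' (sw w • w)) w := by
  have hcont := nehari_continuousAt hc sw hpos hlt hgt w hw
  have hne : ∀ᶠ v in 𝓝 w, v ≠ 0 := isOpen_ne.mem_nhds hw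
  set L := Φ' (sw w • w) with hL
  have hstrict : HasStrictFDerivAt Φ L (sw w • w) :=
    hasStrictFDerivAt_of_hasFDerivAt_of_continuousAt (Eventually.of_forall hd) hc.continuousAt
  have ho := hstrict.isLittleO
  -- lower bound
  have hlow : (fun v => Φ (sw w • v) - Φ (sw w • w) - L (sw w • v - sw w • w)) =o[𝓝 w]
      fun v => v - w := by
    have ht : Tendsto (fun v : E => (sw w • v, sw w • w)) (𝓝 w) (𝓝 (sw w • w, sw w • w)) :=
      ((continuous_const_smul (sw w)).prodMk continuous_const).tendsto w
    refine (ho.comp_tendsto ht).trans_isBigO ?_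
    refine IsBigO.of_bound (|sw w|) (Eventually.of_forall fun v => ?_)
    simp [← smul_sub, norm_smul]
  have hup1 : (fun v => Φ (sw v • v) - Φ (sw v • w) - L (sw v • v - sw v • w)) =o[𝓝 w]
      fun v => v - w := by
    have ht : Tendsto (fun v : E => (sw v • v, sw v • w)) (𝓝 w) (𝓝 (sw w • w, sw w • w)) :=
      (hcont.smul continuousAt_id).prodMk_nhds (hcont.smul continuousAt_const)
    refine (ho.comp_tendsto ht).trans_isBigO ?_
    refine IsBigO.of_bound (|sw w| + 1) ?_
    have hb : ∀ᶠ v in 𝓝 w, |sw v| < |sw w| + 1 :=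
      hcont.abs.eventually (gt_mem_nhds (by linarith))
    filter_upwards [hb] with v hv
    simp only [Function.comp, ← smul_sub, norm_smul, Real.norm_eq_abs]
    gcongr
  have hup2 : (fun v => (sw v - sw w) * L (v - w)) =o[𝓝 w] fun v => v - w := by
    have h1 : (fun v => sw v - sw w) =o[𝓝 w] fun _ => (1:ℝ) := by
      rw [isLittleO_one_iff]
      have := hcont.sub (continuousAt_const (y := sw w))
      rw [ContinuousAt] at this
      simpa [Pi.sub_def] using this
    have h2 : (fun v => L (v - w)) =O[𝓝 w] fun v => ‖v - w‖ :=
      (L.isBigO_sub (𝓝 w) w).norm_right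
    have := h1.mul_isBigO h2
    simpa using this
  rw [hasFDerivAt_iff_isLittleO]
  refine IsBigO.trans_isLittleO ?_ (hlow.norm_left.add (hup1.add hup2).norm_left)
  refine IsBigO.of_bound 1 ?_
  filter_upwards [hne] with v hv
  have m1 := nehari_max hd w (sw w) (hlt w hw) (hgt w hw) (sw v) (hpos v hv)
  have m2 := nehari_max hd v (sw v) (hlt v hv) (hgt v hv) (sw w) (hpos w hw)
  simp only [← smul_sub, map_smul, smul_eq_mul, smul_apply, Real.norm_eq_abs,
    one_mul]
  set l := L (v - w)
  have e1 := neg_abs_le (Φ (sw w • v) - Φ (sw w • w) - sw w * l)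
  have e2 := le_abs_self (Φ (sw v • v) - Φ (sw v • w) - sw v * l + (sw v - sw w) * l)
  have p1 := abs_nonneg (Φ (sw w • v) - Φ (sw w • w) - sw w * l)
  have p2 := abs_nonneg (Φ (sw v • v) - Φ (sw v • w) - sw v * l + (sw v - sw w) * l)
  rw [abs_of_nonneg (add_nonneg p1 p2)]
  rw [abs_le]
  constructor <;> linarith

theorem nehari_contDiffOn {Φ : E → ℝ} {Φ' : E → E →L[ℝ] ℝ}
    (hd : ∀ u, HasFDerivAt Φ (Φ' u) u) (hc : Continuous Φ') (sw : E → ℝ)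
    (hpos : ∀ w, w ≠ 0 → 0 < sw w)
    (hlt : ∀ w, w ≠ 0 → ∀ s, 0 < s → s < sw w → 0 < Φ' (s • w) w)
    (hgt : ∀ w, w ≠ 0 → ∀ s, sw w < s → Φ' (s • w) w < 0) :
    ContDiffOn ℝ 1 (fun v => Φ (sw v • v)) {w : E | w ≠ 0} := by
  have h := nehari_hasFDerivAt hd hc sw hpos hlt hgt
  have ho : IsOpen {w : E | w ≠ 0} := isOpen_ne
  have hz : (1 : WithTop ℕ∞) = 0 + 1 := by simp
  rw [hz, contDiffOn_succ_iff_fderiv_of_isOpen ho]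
  refine ⟨fun w hw => (h w hw).differentiableAt.differentiableWithinAt, by simp, ?_⟩
  rw [contDiffOn_zero]
  have hc2 : ContinuousOn (fun w => sw w • Φ' (sw w • w)) {w : E | w ≠ 0} := by
    intro w hw
    have hcont := nehari_continuousAt hc sw hpos hlt hgt w hw
    refine ContinuousAt.continuousWithinAt ?_
    exact hcont.smul (hc.continuousAt.comp (hcont.smul continuousAt_id))
  exact hc2.congr fun w hw => (h w hw).fderiv
end partC

section partA

theorem l2_clm {X Y : Type*} (T : H1 X →ₗ[ℝ] H1 Y) (h : ∀ y, Continuous fun u => T u y) :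
    Continuous T := by
  refine T.continuous_of_seq_closed_graph fun u x z hu hT => ?_
  ext y
  have h1 := ((h y).tendsto x).comp hu
  have h2 := ((l2_apply_cont y).tendsto z).comp hT
  exact tendsto_nhds_unique h2 h1

theorem edge_swap {X : Type*} (adj : X → X → Prop)
    (hsym : ∀ x y, adj x y → adj y x) (g : X → ℝ)
    (h : Summable fun e : (Σ x, {y : X // adj x y}) => g e.1) :
    Summable fun e : (Σ x, {y : X // adj x y}) => g e.2.1 := by
  have hinj : Function.Injective (fun e : (Σ x, {y : X // adj x y}) =>
      (⟨e.2.1, ⟨e.1, hsym _ _ e.2.2⟩⟩ : (Σ x, {y : X // adj x y}))) := by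
    refine Function.LeftInverse.injective (g := fun e : (Σ x, {y : X // adj x y}) =>
      (⟨e.2.1, ⟨e.1, hsym _ _ e.2.2⟩⟩ : (Σ x, {y : X // adj x y}))) ?_
    rintro ⟨x, y, hxy⟩
    rfl
  exact h.comp_injective hinj

theorem edge_summable {X : Type*} (adj : X → X → Prop) (D : ℕ)
    (hsym : ∀ x y, adj x y → adj y x)
    (hfin : ∀ x, {y | adj x y}.Finite)
    (hdeg : ∀ x, {y | adj x y}.ncard ≤ D) (u : H1 X) :
    Summable fun e : (Σ x, {y : X // adj x y}) => (u e.2.1 - u e.1)^2 := by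
  have hf : ∀ x, Finite {y : X // adj x y} := fun x => (hfin x).to_subtype
  have h1 : Summable fun e : (Σ x, {y : X // adj x y}) => (u e.1)^2 := by
    rw [summable_sigma_of_nonneg (fun e => sq_nonneg _)]
    refine ⟨fun x => Summable.of_finite, ?_⟩
    refine Summable.of_nonneg_of_le (fun x => tsum_nonneg fun _ => sq_nonneg _) (fun x => ?_)
      ((l2_summable_sq u).mul_left (D:ℝ))
    have h3 : Nat.card {y : X // adj x y} ≤ D :=
      (Nat.card_coe_set_eq {y | adj x y}).le.trans (hdeg x)
    have h4 : (Nat.card {y : X // adj x y} : ℝ) ≤ D := Nat.cast_le.2 h3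
    have h5 : ∑' _ : {y : X // adj x y}, (u x)^2 = Nat.card {y : X // adj x y} * (u x)^2 := by
      rw [tsum_const, nsmul_eq_mul]
    exact h5.le.trans (mul_le_mul_of_nonneg_right h4 (sq_nonneg _))
  have h2 : Summable fun e : (Σ x, {y : X // adj x y}) => (u e.2.1)^2 :=
    edge_swap adj hsym (fun x => (u x)^2) h1
  refine Summable.of_nonneg_of_le (fun e => sq_nonneg _) (fun e => ?_) ((h1.add h2).mul_left 2)
  generalize u e.2.1 = b
  generalize u e.1 = c
  nlinarith [sq_nonneg (b + c)]

theorem quad_form {X : Type*} (adj : X → X → Prop) (D : ℕ)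
    (hsym : ∀ x y, adj x y → adj y x)
    (hfin : ∀ x, {y | adj x y}.Finite)
    (hdeg : ∀ x, {y | adj x y}.ncard ≤ D)
    (Vp : X → ℝ) (C1 C2 : ℝ) (hC1 : 0 < C1)
    (hVbd : ∀ x, C1 ≤ Vp x ∧ Vp x ≤ C2) :
    ∃ Φ' : H1 X →L[ℝ] (H1 X →L[ℝ] ℝ), ∀ u : H1 X,
      HasFDerivAt (fun u : H1 X =>
        (1/2) * ∑' x, (gradSq adj (fun y => u y) x + Vp x * (u x)^2)) (Φ' u) u := by
  let d : H1 X →ₗ[ℝ] H1 (Σ x, {y : X // adj x y}) :=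
    { toFun := fun u => ⟨fun e => u e.2.1 - u e.1, l2_mem (edge_summable adj D hsym hfin hdeg u)⟩
      map_add' := fun u v => by
        ext e
        change (u + v) e.2.1 - (u + v) e.1 = (u e.2.1 - u e.1) + (v e.2.1 - v e.1)
        simp only [lp.coeFn_add, Pi.add_apply]; ring
      map_smul' := fun c u => by
        ext e
        change (c • u) e.2.1 - (c • u) e.1 = c * (u e.2.1 - u e.1)
        simp only [lp.coeFn_smul, Pi.smul_apply, smul_eq_mul]; ring }
  have hdx : ∀ u e, d u e = u e.2.1 - u e.1 := fun u e => rfl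
  have hdc : Continuous d := l2_clm d fun e => by
    simp only [hdx]
    exact (l2_apply_cont _).sub (l2_apply_cont _)
  have hVs : ∀ u : H1 X, Summable fun x => (Real.sqrt (Vp x) * u x)^2 := fun u => by
    refine Summable.of_nonneg_of_le (fun x => sq_nonneg _) (fun x => ?_)
      ((l2_summable_sq u).mul_left C2)
    rw [mul_pow, Real.sq_sqrt (hC1.le.trans (hVbd x).1)]
    exact mul_le_mul_of_nonneg_right (hVbd x).2 (sq_nonneg _)
  let m : H1 X →ₗ[ℝ] H1 X :=
    { toFun := fun u => ⟨fun x => Real.sqrt (Vp x) * u x, l2_mem (hVs u)⟩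
      map_add' := fun u v => by
        ext x
        change Real.sqrt (Vp x) * (u + v) x = Real.sqrt (Vp x) * u x + Real.sqrt (Vp x) * v x
        simp only [lp.coeFn_add, Pi.add_apply]; ring
      map_smul' := fun c u => by
        ext x
        change Real.sqrt (Vp x) * (c • u) x = c * (Real.sqrt (Vp x) * u x)
        simp only [lp.coeFn_smul, Pi.smul_apply, smul_eq_mul]; ring }
  have hmx : ∀ u x, m u x = Real.sqrt (Vp x) * u x := fun u x => rfl
  have hmc : Continuous m := l2_clm m fun x => by
    simp only [hmx]
    exact continuous_const.mul (l2_apply_cont _)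
  let dL : H1 X →L[ℝ] H1 (Σ x, {y : X // adj x y}) := ⟨d, hdc⟩
  let mL : H1 X →L[ℝ] H1 X := ⟨m, hmc⟩
  have hQ : ∀ u : H1 X, (1/2) * ∑' x, (gradSq adj (fun y => u y) x + Vp x * (u x)^2) =
      (1/2) * ((1/2) * ‖dL u‖^2 + ‖mL u‖^2) := by
    intro u
    have hE := edge_summable adj D hsym hfin hdeg u
    have e1 : ‖dL u‖^2 = ∑' x, ∑' y : {y : X // adj x y}, (u y.1 - u x)^2 := by
      rw [l2_norm_sq]
      exact hE.tsum_sigma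
    have e2 : ‖mL u‖^2 = ∑' x, Vp x * (u x)^2 := by
      rw [l2_norm_sq]
      refine tsum_congr fun x => ?_
      change (Real.sqrt (Vp x) * u x)^2 = _
      rw [mul_pow, Real.sq_sqrt (hC1.le.trans (hVbd x).1)]
    have s2 : Summable fun x => Vp x * (u x)^2 := by
      refine (hVs u).congr fun x => ?_
      rw [mul_pow, Real.sq_sqrt (hC1.le.trans (hVbd x).1)]
    have s1 : Summable fun x => gradSq adj (fun y => u y) x := by
      simp only [gradSq, gammaProd, ← sq]
      exact hE.sigma.mul_left _
    rw [s1.tsum_add s2, e1, e2]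
    simp only [gradSq, gammaProd, ← sq, tsum_mul_left]
  refine ⟨(1/2 : ℝ) • ((ContinuousLinearMap.compL ℝ _ _ ℝ).flip dL ∘L (innerSL ℝ) ∘L dL) +
    ((ContinuousLinearMap.compL ℝ _ _ ℝ).flip mL ∘L (innerSL ℝ) ∘L mL), fun u => ?_⟩
  simp only [hQ]
  have h1 := (dL.hasFDerivAt (x := u)).norm_sq
  have h2 := (mL.hasFDerivAt (x := u)).norm_sq
  refine (((h1.const_mul (1/2)).add h2).const_mul (1/2)).congr_fderiv ?_
  ext z
  simp
  ring_nf
  rfl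
end partA

section partD

theorem f_mono_pt (g : ℝ → ℝ) (hg1 : StrictMonoOn (fun t => g t / |t|) (Set.Iio 0))
    (hg2 : StrictMonoOn (fun t => g t / |t|) (Set.Ioi 0)) (w s t : ℝ) (hw : w ≠ 0)
    (hs : 0 < s) (hst : s < t) : t * (g (s * w) * w) < s * (g (t * w) * w) := by
  have ht : 0 < t := hs.trans hst
  have hw' : 0 < |w| := abs_pos.2 hw
  rcases lt_or_gt_of_ne hw with h | h
  · have := hg1 (a := t * w) (b := s * w) (mul_neg_of_pos_of_neg ht h)
      (mul_neg_of_pos_of_neg hs h) (by nlinarith)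
    simp only [abs_mul, abs_of_pos hs, abs_of_pos ht] at this
    rw [div_lt_div_iff₀ (by positivity) (by positivity)] at this
    have h3 : g (t * w) * s < g (s * w) * t := by
      rw [← mul_assoc, ← mul_assoc] at this
      exact lt_of_mul_lt_mul_right this hw'.le
    nlinarith
  · have := hg2 (a := s * w) (b := t * w) (mul_pos hs h) (mul_pos ht h) (by nlinarith)
    simp only [abs_mul, abs_of_pos hs, abs_of_pos ht] at this
    rw [div_lt_div_iff₀ (by positivity) (by positivity)] at this
    have h3 : g (s * w) * t < g (t * w) * s := by
      rw [← mul_assoc, ← mul_assoc] at this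
      exact lt_of_mul_lt_mul_right this hw'.le
    nlinarith

theorem nem_mono {X : Type*} (f : X → ℝ → ℝ)
    (hs : ∀ ε > 0, ∃ δ > 0, ∀ x t, |t| < δ → |f x t| ≤ ε * |t|)
    (hmono : ∀ x, StrictMonoOn (fun t => f x t / |t|) (Set.Iio 0) ∧
             StrictMonoOn (fun t => f x t / |t|) (Set.Ioi 0))
    (w : H1 X) (hw : w ≠ 0) (s t : ℝ) (hs0 : 0 < s) (hst : s < t) :
    t * inner ℝ (nem f hs (s • w)) w < s * inner ℝ (nem f hs (t • w)) w := by
  have h1 := (lp.hasSum_inner (𝕜 := ℝ) (nem f hs (s • w)) w).mul_left t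
  have h2 := (lp.hasSum_inner (𝕜 := ℝ) (nem f hs (t • w)) w).mul_left s
  have hex : ∃ x, w x ≠ 0 := by
    by_contra hcon
    push Not at hcon
    exact hw (by ext x; simpa using hcon x)
  obtain ⟨x₀, hx₀⟩ := hex
  have hpt : ∀ x, w x ≠ 0 → t * inner ℝ (nem f hs (s • w) x) (w x) <
      s * inner ℝ (nem f hs (t • w) x) (w x) := fun x hx => by
    have := f_mono_pt (f x) (hmono x).1 (hmono x).2 (w x) s t hx hs0 hst
    simpa [nem_apply, mul_comm] using this
  refine hasSum_lt (i := x₀) (fun x => ?_) (hpt x₀ hx₀) h1 h2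
  by_cases hx : w x = 0
  · simp [hx]
  · exact (hpt x hx).le

theorem nrmH_smul' {X : Type*} (adj : X → X → Prop) (Vp : X → ℝ) (s : ℝ) (hs : 0 < s) (w : H1 X) :
    nrmH adj Vp (s • w) = s * nrmH adj Vp w := by
  have e : ∀ x, gradSq adj (fun y => (s • w) y) x + Vp x * ((s • w) x)^2 =
      s^2 * (gradSq adj (fun y => w y) x + Vp x * (w x)^2) := fun x => by
    simp only [gradSq, gammaProd, lp.coeFn_smul, Pi.smul_apply, smul_eq_mul]
    have : ∀ y : {y : X // adj x y}, (s * w y.1 - s * w x) * (s * w y.1 - s * w x) =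
      s^2 * ((w y.1 - w x) * (w y.1 - w x)) := fun y => by ring
    simp only [this, tsum_mul_left]
    ring
  unfold nrmH nrmV
  simp only [e, tsum_mul_left]
  rw [Real.sqrt_mul (sq_nonneg s), Real.sqrt_sq hs.le]
end partD

end helpers

/-- Corollary 3.6: `Ψ = Ψ̂|_S` is `C¹` on the unit sphere `S` and
`Ψ'(w)z = ‖m(w)‖·Φ'(m(w))z` for all `z ∈ T_wS = {z : ⟨w,z⟩ = 0}`. -/
theorem stmt13
    {Vtx : Type*} (adj : Vtx → Vtx → Prop) (D : ℕ)
    (hsym : ∀ x y, adj x y → adj y x)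
    (hirr : ∀ x, ¬ adj x x)
    (hfin : ∀ x, {y | adj x y}.Finite)
    (hdeg : ∀ x, {y | adj x y}.ncard ≤ D)
    (Vp : Vtx → ℝ) (C1 C2 : ℝ) (hC1 : 0 < C1)
    (hVbd : ∀ x, C1 ≤ Vp x ∧ Vp x ≤ C2)
    (f : Vtx → ℝ → ℝ) (hcont : ∀ x, Continuous (f x))
    (a q : ℝ) (ha : 0 < a) (hq : 2 < q)
    (hgrowth : ∀ x t, |f x t| ≤ a * (|t| + |t| ^ (q - 1)))
    (hsmall : ∀ ε > 0, ∃ δ > 0, ∀ x t, t ≠ 0 → |t| < δ → |f x t| ≤ ε * |t|)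
    (hmono : ∀ x, StrictMonoOn (fun t => f x t / |t|) (Set.Iio 0) ∧
             StrictMonoOn (fun t => f x t / |t|) (Set.Ioi 0))
    (F : Vtx → ℝ → ℝ) (hF : ∀ x t, F x t = ∫ s in (0:ℝ)..t, f x s)
    (hsuper : ∀ M : ℝ, ∃ R > 0, ∀ x t, R ≤ |t| → M ≤ F x t / t ^ 2)
    (sw : H1 Vtx → ℝ)
    (hsw : ∀ w : H1 Vtx, w ≠ 0 → 0 < sw w ∧
      fderiv ℝ (PhiF adj Vp F) (sw w • w) (sw w • w) = 0 ∧
      ∀ s : ℝ, 0 < s → fderiv ℝ (PhiF adj Vp F) (s • w) (s • w) = 0 → s = sw w)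
    :
    ContDiffOn ℝ 1 (fun w : H1 Vtx => PhiF adj Vp F (sw w • w))
      {w : H1 Vtx | nrmH adj Vp w = 1} ∧
    ∀ w : H1 Vtx, nrmH adj Vp w = 1 → ∀ z : H1 Vtx, iprodH adj Vp w z = 0 →
      fderiv ℝ (fun v : H1 Vtx => PhiF adj Vp F (sw v • v)) w z =
        nrmH adj Vp (sw w • w) * fderiv ℝ (PhiF adj Vp F) (sw w • w) z := by
  have hs : ∀ ε > 0, ∃ δ > 0, ∀ x t, |t| < δ → |f x t| ≤ ε * |t| := by
    intro ε hε
    obtain ⟨δ, hδ, h⟩ := hsmall ε hε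
    refine ⟨δ, hδ, fun x t ht => ?_⟩
    by_cases h0 : t = 0
    · rw [h0, f_zero f hcont hsmall x]; simp
    · exact h x t h0 ht
  obtain ⟨B, hB⟩ := quad_form adj D hsym hfin hdeg Vp C1 C2 hC1 hVbd
  let Φ' : H1 Vtx → H1 Vtx →L[ℝ] ℝ := fun u => B u - innerSL ℝ (nem f hs u)
  have hd : ∀ u, HasFDerivAt (PhiF adj Vp F) (Φ' u) u := fun u =>
    (hB u).sub (J_hasFDerivAt f hcont F hF hs u)
  have hc : Continuous Φ' :=
    B.continuous.sub ((innerSL ℝ).continuous.comp (nem_continuous f hcont hs))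
  have happ : ∀ (s : ℝ) (w : H1 Vtx),
      Φ' (s • w) w = s * B w w - inner ℝ (nem f hs (s • w)) w := fun s w => by
    simp [Φ']
  have hpos : ∀ w, w ≠ 0 → 0 < sw w := fun w hw => (hsw w hw).1
  have hzero : ∀ w, w ≠ 0 → sw w * B w w = inner ℝ (nem f hs (sw w • w)) w := fun w hw => by
    have h1 := (hsw w hw).2.1
    rw [(hd _).fderiv, map_smul, smul_eq_mul, happ] at h1
    rcases mul_eq_zero.1 h1 with h | h
    · exact absurd h (hpos w hw).ne'
    · linarith
  have hlt : ∀ w, w ≠ 0 → ∀ s, 0 < s → s < sw w → 0 < Φ' (s • w) w := fun w hw s h0 h1 => by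
    have h2 := nem_mono f hs hmono w hw s (sw w) h0 h1
    rw [← hzero w hw] at h2
    rw [happ]
    have h3 : sw w * inner ℝ (nem f hs (s • w)) w < sw w * (s * B w w) := by linarith
    have := lt_of_mul_lt_mul_left h3 (hpos w hw).le
    linarith
  have hgt : ∀ w, w ≠ 0 → ∀ s, sw w < s → Φ' (s • w) w < 0 := fun w hw s h1 => by
    have h2 := nem_mono f hs hmono w hw (sw w) s (hpos w hw) h1
    rw [← hzero w hw] at h2
    rw [happ]
    have h3 : sw w * (s * B w w) < sw w * inner ℝ (nem f hs (s • w)) w := by linarith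
    have := lt_of_mul_lt_mul_left h3 (hpos w hw).le
    linarith
  have hne : ∀ w : H1 Vtx, nrmH adj Vp w = 1 → w ≠ 0 := by
    rintro w hw rfl
    simp [nrmH, nrmV, gradSq, gammaProd] at hw
  refine ⟨(nehari_contDiffOn hd hc sw hpos hlt hgt).mono fun w hw => hne w hw, ?_⟩
  intro w hw z _
  rw [(nehari_hasFDerivAt hd hc sw hpos hlt hgt w (hne w hw)).fderiv, (hd _).fderiv,
    nrmH_smul' adj Vp _ (hpos w (hne w hw)), hw]
  simp
end

section
/- Let f : V × ℝ → ℝ (V any set) be such that for each x, u ↦ f(x,u) is continuous, f(x,u)/u → 0 as u → 0, and u ↦ f(x,u)/|u| is strictly increasing on (−∞,0) and on (0,∞). Set F(x,u) = ∫₀ᵘ f(x,s) ds. Then F(x,u) ≤ ½ f(x,u)·u for every x ∈ V and every u ∈ ℝ, with strict inequality for u ≠ 0. -/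
open scoped ENNReal

theorem aux18 (g : ℝ → ℝ) (hg : Continuous g)
    (hm : StrictMonoOn (fun t => g t / |t|) (Set.Ioi 0)) (u : ℝ) (hu : 0 < u) :
    (∫ s in (0:ℝ)..u, g s) < (1/2) * (g u * u) := by
  have key : ∀ s, 0 < s → s < u → g s < g u / u * s := by
    intro s hs hsu
    have h := hm (Set.mem_Ioi.2 hs) (Set.mem_Ioi.2 hu) hsu
    simp only [abs_of_pos hs, abs_of_pos hu] at h
    exact (div_lt_iff₀ hs).1 h
  have h1 : (∫ s in (0:ℝ)..u, g s) < ∫ s in (0:ℝ)..u, g u / u * s := by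
    apply intervalIntegral.integral_lt_integral_of_continuousOn_of_le_of_exists_lt hu
      hg.continuousOn (by fun_prop)
    · intro s hs
      rcases eq_or_lt_of_le hs.2 with h | h
      · rw [h]
        apply le_of_eq
        field_simp
      · exact (key s hs.1 h).le
    · exact ⟨u / 2, ⟨by linarith, by linarith⟩, key _ (by linarith) (by linarith)⟩
  have h2 : (∫ s in (0:ℝ)..u, g u / u * s) = (1/2) * (g u * u) := by
    rw [intervalIntegral.integral_const_mul, integral_id]
    field_simp
    ring
  linarith

/-- The elementary estimate `F(x,u) ≤ ½ f(x,u)u`, strict for `u ≠ 0`, where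
`F(x,u) = ∫₀ᵘ f(x,s) ds`. -/
theorem stmt18 {Vtx : Type*} (f : Vtx → ℝ → ℝ)
    (hcont : ∀ x, Continuous (f x))
    (hsmall : ∀ x, Filter.Tendsto (fun t => f x t / t) (nhdsWithin 0 {(0:ℝ)}ᶜ) (nhds 0))
    (hmono : ∀ x, StrictMonoOn (fun t => f x t / |t|) (Set.Iio 0) ∧
             StrictMonoOn (fun t => f x t / |t|) (Set.Ioi 0)) :
    ∀ (x : Vtx) (u : ℝ),
      (∫ s in (0:ℝ)..u, f x s) ≤ (1/2) * (f x u * u) ∧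
      (u ≠ 0 → (∫ s in (0:ℝ)..u, f x s) < (1/2) * (f x u * u)) := by
  intro x u
  have main : u ≠ 0 → (∫ s in (0:ℝ)..u, f x s) < (1/2) * (f x u * u) := by
    intro hu
    rcases lt_or_gt_of_ne hu with h | h
    · have := aux18 (fun t => - f x (-t)) (by have := hcont x; fun_prop) (by
        intro a ha b hb hab
        have := (hmono x).1 (show -b ∈ Set.Iio (0:ℝ) by simpa using hb)
          (show -a ∈ Set.Iio (0:ℝ) by simpa using ha) (by linarith)
        simp only [abs_neg, neg_div] at this ⊢
        linarith) (-u) (by linarith)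
      rw [intervalIntegral.integral_neg, intervalIntegral.integral_comp_neg (f x),
        intervalIntegral.integral_symm] at this
      simp only [neg_neg, neg_zero] at this
      linarith
    · exact aux18 (f x) (hcont x) (hmono x).2 u h
  refine ⟨?_, main⟩
  by_cases hu : u = 0
  · simp [hu]
  · exact (main hu).le
end

section
/- Let N ≥ 1 and let f : ℝ → ℝ be continuous with |f(u)| ≤ a(|u| + |u|^{q−1}) for some a > 0, q > 2, f(u) = o(u) as u → 0, u ↦ f(u)/|u| strictly increasing on (−∞,0) and on (0,∞), and F(u)/u² → ∞ as |u| → ∞, where F(u) = ∫₀ᵘ f(s) ds. Let V : ℤ^N → ℝ satisfy 0 < V₀ ≤ V(x) ≤ V_∞ for all x, with V(x₀) < V_∞ for at least one x₀ ∈ ℤ^N. Define Φ(u) = ½Σ_x(|∇u|²(x) + V(x)u(x)²) − Σ_x F(u(x)) and Φ_∞(u) = ½Σ_x(|∇u|²(x) + V_∞ u(x)²) − Σ_x F(u(x)) on H¹(ℤ^N), and set c = inf_{w ∈ H¹\{0}} sup_{s>0} Φ(sw) and c_∞ = inf_{w ∈ H¹\{0}} sup_{s>0} Φ_∞(sw).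 Then c < c_∞. -/
open scoped ENNReal

theorem aux_F_bound (f : ℝ → ℝ) (f0 : f 0 = 0)
    (hsmall : ∀ ε > 0, ∃ δ > 0, ∀ t : ℝ, t ≠ 0 → |t| < δ → |f t| ≤ ε * |t|)
    (F : ℝ → ℝ) (hF : ∀ t, F t = ∫ s in (0:ℝ)..t, f s) :
    ∀ ε > 0, ∃ δ > 0, ∀ t : ℝ, |t| < δ → |F t| ≤ ε * t ^ 2 := by
  intro ε hε
  obtain ⟨δ, hδ, h⟩ := hsmall ε hε
  refine ⟨δ, hδ, fun t ht => ?_⟩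
  have := intervalIntegral.norm_integral_le_of_norm_le_const (a := 0) (b := t) (f := f)
    (C := ε * |t|) (by
      intro x hx
      have hxt : |x| ≤ |t| := by
        rw [Set.mem_uIoc] at hx
        rcases hx with hx | hx
        · rw [abs_of_pos hx.1, abs_of_pos (by linarith)]; exact hx.2
        · rw [abs_of_nonpos hx.2, abs_of_neg (by linarith)]; linarith
      by_cases h0 : x = 0
      · subst h0; rw [f0]; simp; positivity
      · exact (h x h0 (by linarith)).trans (by gcongr))
  rw [hF, ← Real.norm_eq_abs]
  refine this.trans (le_of_eq ?_)
  rw [sub_zero, mul_assoc, abs_mul_abs_self, sq]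

theorem aux_F_nonneg (f : ℝ → ℝ)
    (hsmall : ∀ ε > 0, ∃ δ > 0, ∀ t : ℝ, t ≠ 0 → |t| < δ → |f t| ≤ ε * |t|)
    (hmono : StrictMonoOn (fun t => f t / |t|) (Set.Iio 0) ∧
             StrictMonoOn (fun t => f t / |t|) (Set.Ioi 0))
    (F : ℝ → ℝ) (hF : ∀ t, F t = ∫ s in (0:ℝ)..t, f s) (t : ℝ) : 0 ≤ F t := by
  have hpos : ∀ t, 0 < t → 0 ≤ f t := by
    intro t ht
    by_contra hneg
    push Not at hneg
    have hk : 0 < -(f t / |t|) := by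
      have := div_neg_of_neg_of_pos hneg (abs_pos.2 ht.ne')
      linarith
    obtain ⟨δ, hδ, h⟩ := hsmall _ hk
    have hm : 0 < min (δ/2) (t/2) := by positivity
    have h1 := hmono.2 (show min (δ/2) (t/2) ∈ Set.Ioi 0 from hm) (show t ∈ Set.Ioi 0 from ht)
      ((min_le_right _ _).trans_lt (by linarith))
    have h2 := h _ hm.ne' (by
      rw [abs_of_pos hm]; exact (min_le_left _ _).trans_lt (by linarith))
    have h3 := (abs_le.1 h2).1
    have : f t / |t| ≤ f (min (δ/2) (t/2)) / |min (δ/2) (t/2)| := by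
      rw [le_div_iff₀ (abs_pos.2 hm.ne')]; linarith
    simp only at h1
    linarith
  have hneg : ∀ t, t < 0 → f t ≤ 0 := by
    intro t ht
    by_contra hneg
    push Not at hneg
    have hk : 0 < (f t / |t|) := div_pos hneg (abs_pos.2 ht.ne)
    obtain ⟨δ, hδ, h⟩ := hsmall _ hk
    have hm : max (-δ/2) (t/2) < 0 := max_lt (by linarith) (by linarith)
    have h1 := hmono.1 (show t ∈ Set.Iio 0 from ht) (show max (-δ/2) (t/2) ∈ Set.Iio 0 from hm)
      (lt_of_lt_of_le (by linarith) (le_max_right _ _))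
    have h2 := h _ hm.ne (by
      rw [abs_of_neg hm]; have := le_max_left (-δ/2) (t/2); linarith)
    have h3 := (abs_le.1 h2).2
    have : f (max (-δ/2) (t/2)) / |max (-δ/2) (t/2)| ≤ f t / |t| := by
      rw [div_le_iff₀ (abs_pos.2 hm.ne)]; linarith
    simp only at h1
    linarith
  rw [hF]
  rcases lt_trichotomy t 0 with ht | ht | ht
  · rw [intervalIntegral.integral_symm, ← intervalIntegral.integral_neg,
      intervalIntegral.integral_of_le ht.le, MeasureTheory.integral_Ioc_eq_integral_Ioo]
    refine MeasureTheory.setIntegral_nonneg measurableSet_Ioo fun x hx => ?_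
    linarith [hneg x hx.2]
  · simp [ht]
  · rw [intervalIntegral.integral_of_le ht.le]
    exact MeasureTheory.setIntegral_nonneg measurableSet_Ioc fun x hx => hpos x hx.1

/-- directions in the lattice -/
def dirSet (N : ℕ) : Set (Fin N → ℤ) := {d | (∑ i, (d i).natAbs) = 1}

theorem dirSet_finite (N : ℕ) : (dirSet N).Finite := by
  refine (Set.Finite.pi' (ι := Fin N) (t := fun _ => Set.Icc (-1 : ℤ) 1)
    (fun _ => Set.finite_Icc _ _)).subset ?_
  intro d hd i
  have h : (d i).natAbs ≤ ∑ i, (d i).natAbs :=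
    Finset.single_le_sum (f := fun i => (d i).natAbs) (fun _ _ => Nat.zero_le _)
      (Finset.mem_univ i)
  have hd' : ∑ i, (d i).natAbs = 1 := hd
  rw [hd'] at h
  constructor <;> omega

noncomputable instance (N : ℕ) : Fintype (dirSet N) := (dirSet_finite N).fintype

/-- neighbours as directions -/
def nbrEquiv (N : ℕ) (x : Fin N → ℤ) : dirSet N ≃ {y // adjZ N x y} where
  toFun d := ⟨x - d.1, by
    have := d.2
    simpa [adjZ, dirSet] using this⟩
  invFun y := ⟨x - y.1, y.2⟩
  left_inv d := by simp
  right_inv y := by simp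

theorem gradSq_eq (N : ℕ) (u : (Fin N → ℤ) → ℝ) (x : Fin N → ℤ) :
    gradSq (adjZ N) u x = (1/2) * ∑ d : dirSet N, (u (x - d.1) - u x) ^ 2 := by
  unfold gradSq gammaProd
  rw [← (nbrEquiv N x).tsum_eq, tsum_fintype]
  simp [nbrEquiv, sq]

theorem summable_shift {N : ℕ} {u : (Fin N → ℤ) → ℝ} (hu : Summable fun x => u x ^ 2)
    (d : Fin N → ℤ) : Summable fun x => u (x - d) ^ 2 :=
  (Equiv.subRight d).summable_iff (f := fun x => u x ^ 2) |>.2 hu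

theorem summable_diff {N : ℕ} {u : (Fin N → ℤ) → ℝ} (hu : Summable fun x => u x ^ 2)
    (d : Fin N → ℤ) : Summable fun x => (u (x - d) - u x) ^ 2 := by
  refine Summable.of_nonneg_of_le (fun _ => sq_nonneg _) (fun x => ?_)
    (((summable_shift hu d).mul_left 2).add (hu.mul_left 2))
  nlinarith [sq_nonneg (u (x - d) + u x)]

theorem gradSq_nonneg (N : ℕ) (u : (Fin N → ℤ) → ℝ) (x : Fin N → ℤ) :
    0 ≤ gradSq (adjZ N) u x := by
  rw [gradSq_eq]
  have : 0 ≤ ∑ d : dirSet N, (u (x - d.1) - u x) ^ 2 :=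
    Finset.sum_nonneg fun _ _ => sq_nonneg _
  linarith

theorem summable_gradSq {N : ℕ} {u : (Fin N → ℤ) → ℝ} (hu : Summable fun x => u x ^ 2) :
    Summable fun x => gradSq (adjZ N) u x := by
  simp only [gradSq_eq]
  exact (summable_sum fun (d : dirSet N) _ => summable_diff hu d.1).mul_left _

theorem tsum_gradSq_le {N : ℕ} {u : (Fin N → ℤ) → ℝ} (hu : Summable fun x => u x ^ 2) :
    ∑' x, gradSq (adjZ N) u x ≤ 2 * Fintype.card (dirSet N) * ∑' x, u x ^ 2 := by
  simp only [gradSq_eq]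
  rw [tsum_mul_left, Summable.tsum_finsetSum (fun (d : dirSet N) _ => summable_diff hu d.1)]
  have h : ∀ d ∈ (Finset.univ : Finset (dirSet N)),
      ∑' x, (u (x - d.1) - u x) ^ 2 ≤ 4 * ∑' x, u x ^ 2 := by
    intro d _
    have h1 : ∑' x, u (x - d.1) ^ 2 = ∑' x, u x ^ 2 :=
      (Equiv.subRight d.1).tsum_eq (fun x => u x ^ 2)
    have h2 : ∑' x, (u (x - d.1) - u x) ^ 2 ≤ ∑' x, (2 * u (x - d.1) ^ 2 + 2 * u x ^ 2) :=
      (summable_diff hu d.1).tsum_le_tsum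
        (fun x => by nlinarith [sq_nonneg (u (x - d.1) + u x)])
        (((summable_shift hu d.1).mul_left 2).add (hu.mul_left 2))
    rw [((summable_shift hu d.1).mul_left 2).tsum_add (hu.mul_left 2), tsum_mul_left,
      tsum_mul_left, h1] at h2
    linarith
  have := Finset.sum_le_card_nsmul _ _ _ h
  rw [nsmul_eq_mul, Finset.card_univ] at this
  linarith

theorem h1_summable {α : Type*} (w : H1 α) : Summable fun x => (w x) ^ 2 := by
  have := (lp.memℓp w).summable (p := 2) (by norm_num)
  simpa using this

theorem h1_ne {α : Type*} (w : H1 α) (hw : w ≠ 0) : ∃ x, w x ≠ 0 := by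
  by_contra h
  push Not at h
  exact hw (by ext x; simpa using h x)

/-- translated function -/
def shiftH {N : ℕ} (w : H1 (Fin N → ℤ)) (t : Fin N → ℤ) : H1 (Fin N → ℤ) :=
  ⟨fun x => w (x - t), by
    refine memℓp_gen ?_
    simpa using summable_shift (h1_summable w) t⟩

theorem shiftH_apply {N : ℕ} (w : H1 (Fin N → ℤ)) (t x : Fin N → ℤ) :
    shiftH w t x = w (x - t) := rfl

theorem Phi_shift {N : ℕ} (C : ℝ) (F : ℝ → ℝ) (w : H1 (Fin N → ℤ)) (t : Fin N → ℤ) (s : ℝ) :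
    PhiF (adjZ N) (fun _ => C) (fun _ => F) (s • shiftH w t) =
      PhiF (adjZ N) (fun _ => C) (fun _ => F) (s • w) := by
  unfold PhiF
  congr 1
  · congr 1
    rw [← (Equiv.subRight t).tsum_eq (fun x => gradSq (adjZ N) (fun y => (s • w) y) x
      + C * ((s • w) x) ^ 2)]
    refine tsum_congr fun x => ?_
    simp only [gradSq_eq, lp.coeFn_smul, Pi.smul_apply, shiftH_apply, Equiv.subRight_apply]
    simp only [sub_right_comm x _ t]
  · rw [← (Equiv.subRight t).tsum_eq (fun x => F ((s • w) x))]
    rfl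

theorem summable_pot {N : ℕ} {Vp : (Fin N → ℤ) → ℝ} {C : ℝ} (h0 : ∀ x, 0 ≤ Vp x)
    (h1 : ∀ x, Vp x ≤ C) (w : H1 (Fin N → ℤ)) : Summable fun x => Vp x * (w x) ^ 2 :=
  Summable.of_nonneg_of_le (fun x => mul_nonneg (h0 x) (sq_nonneg _))
    (fun x => mul_le_mul_of_nonneg_right (h1 x) (sq_nonneg _)) ((h1_summable w).mul_left C)

theorem summable_F {α : Type*} {F : ℝ → ℝ}
    (hFs : ∀ ε > 0, ∃ δ > 0, ∀ t : ℝ, |t| < δ → |F t| ≤ ε * t ^ 2) (w : H1 α) :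
    Summable fun x => F (w x) := by
  obtain ⟨δ, hδ, h⟩ := hFs 1 one_pos
  refine Summable.of_norm_bounded_eventually (h1_summable w) ?_
  have ht := (h1_summable w).tendsto_cofinite_zero
  filter_upwards [ht.eventually_lt_const (show 0 < δ ^ 2 by positivity)] with x hx
  have := h (w x) (abs_lt_of_sq_lt_sq hx hδ.le)
  simpa using this

/-- Lower bound of the energy where the function is pointwise small. -/
theorem Phi_lower {N : ℕ} {Vp : (Fin N → ℤ) → ℝ} {V0 C : ℝ} (hV0 : 0 < V0)
    (h0 : ∀ x, V0 ≤ Vp x) (h1 : ∀ x, Vp x ≤ C) {F : ℝ → ℝ}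
    (hFs : ∀ ε > 0, ∃ δ > 0, ∀ t : ℝ, |t| < δ → |F t| ≤ ε * t ^ 2) :
    ∃ δ > 0, ∀ w : H1 (Fin N → ℤ), (∀ x, |w x| < δ) →
      V0 / 4 * ∑' x, (w x) ^ 2 ≤ PhiF (adjZ N) Vp (fun _ => F) w := by
  obtain ⟨δ, hδ, h⟩ := hFs (V0 / 4) (by positivity)
  refine ⟨δ, hδ, fun w hw => ?_⟩
  unfold PhiF
  have hs := h1_summable w
  have e1 : ∑' x, F (w x) ≤ ∑' x, V0 / 4 * (w x) ^ 2 :=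
    (summable_F hFs w).tsum_le_tsum (fun x => (le_abs_self _).trans (h _ (hw x))) (hs.mul_left _)
  have e2 : ∑' x, V0 * (w x) ^ 2 ≤ ∑' x, (gradSq (adjZ N) (fun y => w y) x + Vp x * (w x) ^ 2) :=
    (hs.mul_left _).tsum_le_tsum (fun x => by
      have := gradSq_nonneg N (fun y => w y) x
      have := mul_le_mul_of_nonneg_right (h0 x) (sq_nonneg (w x))
      linarith)
      ((summable_gradSq hs).add (summable_pot (fun x => hV0.le.trans (h0 x)) h1 w))
  rw [tsum_mul_left] at e1 e2
  linarith

theorem Phi_upper {N : ℕ} {Vp : (Fin N → ℤ) → ℝ} {C : ℝ}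
    (h0 : ∀ x, 0 ≤ Vp x) (h1 : ∀ x, Vp x ≤ C) {F : ℝ → ℝ} (w : H1 (Fin N → ℤ)) :
    PhiF (adjZ N) Vp (fun _ => F) w ≤
      (Fintype.card (dirSet N) + C / 2) * ∑' x, (w x) ^ 2 - ∑' x, F (w x) := by
  unfold PhiF
  have hs := h1_summable w
  rw [(summable_gradSq hs).tsum_add (summable_pot h0 h1 w)]
  have e1 := tsum_gradSq_le hs
  have e2 : ∑' x, Vp x * (w x) ^ 2 ≤ ∑' x, C * (w x) ^ 2 :=
    (summable_pot h0 h1 w).tsum_le_tsum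
      (fun x => mul_le_mul_of_nonneg_right (h1 x) (sq_nonneg _)) (hs.mul_left _)
  rw [tsum_mul_left] at e2
  linarith

theorem tsum_smul_sq {α : Type*} (s : ℝ) (w : H1 α) :
    ∑' x, ((s • w) x) ^ 2 = s ^ 2 * ∑' x, (w x) ^ 2 := by
  rw [← tsum_mul_left]
  refine tsum_congr fun x => ?_
  simp only [lp.coeFn_smul, Pi.smul_apply, smul_eq_mul]
  ring

theorem tsum_sq_pos {α : Type*} (w : H1 α) (hw : w ≠ 0) : 0 < ∑' x, (w x) ^ 2 := by
  obtain ⟨x, hx⟩ := h1_ne w hw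
  exact (h1_summable w).tsum_pos (fun _ => sq_nonneg _) x (by positivity)

theorem Phi_bdd {N : ℕ} {Vp : (Fin N → ℤ) → ℝ} {C : ℝ}
    (h0 : ∀ x, 0 ≤ Vp x) (h1 : ∀ x, Vp x ≤ C) {F : ℝ → ℝ}
    (hFs : ∀ ε > 0, ∃ δ > 0, ∀ t : ℝ, |t| < δ → |F t| ≤ ε * t ^ 2)
    (hFn : ∀ t, 0 ≤ F t)
    (hsuper : ∀ M : ℝ, ∃ R > 0, ∀ t : ℝ, R ≤ |t| → M ≤ F t / t ^ 2)
    (w : H1 (Fin N → ℤ)) (hw : w ≠ 0) :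
    BddAbove ((fun s : ℝ => PhiF (adjZ N) Vp (fun _ => F) (s • w)) '' Set.Ioi 0) := by
  obtain ⟨x1, hx1⟩ := h1_ne w hw
  set A := ∑' x, (w x) ^ 2 with hA
  have hApos : 0 < A := tsum_sq_pos w hw
  have hC : 0 ≤ C := (h0 0).trans (h1 0)
  set K : ℝ := Fintype.card (dirSet N) + C / 2 with hK
  have hKn : 0 ≤ K := by positivity
  obtain ⟨R, hR, h⟩ := hsuper (K * A / (w x1) ^ 2)
  have hw2 : 0 < (w x1) ^ 2 := by positivity
  refine ⟨K * (R ^ 2 / (w x1) ^ 2 * A), ?_⟩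
  rintro _ ⟨s, hs, rfl⟩
  have hs : 0 < s := hs
  have hu := Phi_upper h0 h1 (F := F) (s • w)
  rw [tsum_smul_sq, ← hK, ← hA] at hu
  refine hu.trans ?_
  by_cases hsR : R ≤ |s * w x1|
  · have h2 := h _ hsR
    have hp : 0 < (s * w x1) ^ 2 := by positivity
    rw [le_div_iff₀ hp] at h2
    have h3 : F (s * w x1) ≤ ∑' x, F ((s • w) x) :=
      (summable_F hFs (s • w)).le_tsum x1 (fun _ _ => hFn _)
    have h4 : K * A / (w x1) ^ 2 * (s * w x1) ^ 2 = K * (s ^ 2 * A) := by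
      field_simp
    have : 0 ≤ K * (R ^ 2 / (w x1) ^ 2 * A) := by positivity
    linarith
  · push Not at hsR
    have h2 : (s * w x1) ^ 2 ≤ R ^ 2 := by
      rw [← sq_abs]; gcongr
    have h3 : s ^ 2 ≤ R ^ 2 / (w x1) ^ 2 := by
      rw [le_div_iff₀ hw2]; linarith [mul_pow s (w x1) 2]
    have h4 : 0 ≤ ∑' x, F ((s • w) x) := tsum_nonneg fun _ => hFn _
    have : K * (s ^ 2 * A) ≤ K * (R ^ 2 / (w x1) ^ 2 * A) := by gcongr
    linarith

theorem Phi_compare {N : ℕ} {Vp : (Fin N → ℤ) → ℝ} {C : ℝ}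
    (h0 : ∀ x, 0 ≤ Vp x) (h1 : ∀ x, Vp x ≤ C) {F : ℝ → ℝ} (w : H1 (Fin N → ℤ))
    (x0 : Fin N → ℤ) :
    PhiF (adjZ N) Vp (fun _ => F) w + (1/2) * ((C - Vp x0) * (w x0) ^ 2) ≤
      PhiF (adjZ N) (fun _ => C) (fun _ => F) w := by
  unfold PhiF
  have hs := h1_summable w
  have hC : 0 ≤ C := (h0 0).trans (h1 0)
  have s1 := (summable_gradSq hs).add (summable_pot h0 h1 w)
  have s2 := (summable_gradSq hs).add (hs.mul_left C)
  have e := (s2.sub s1).le_tsum x0 (fun x _ => by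
    have := mul_le_mul_of_nonneg_right (h1 x) (sq_nonneg (w x))
    linarith)
  rw [s2.tsum_sub s1] at e
  linarith

theorem le_sSup_ray {N : ℕ} {Vp : (Fin N → ℤ) → ℝ} {V0 C : ℝ} (hV0 : 0 < V0)
    (h0 : ∀ x, V0 ≤ Vp x) (h1 : ∀ x, Vp x ≤ C) {F : ℝ → ℝ}
    (hFs : ∀ ε > 0, ∃ δ > 0, ∀ t : ℝ, |t| < δ → |F t| ≤ ε * t ^ 2)
    (hFn : ∀ t, 0 ≤ F t)
    (hsuper : ∀ M : ℝ, ∃ R > 0, ∀ t : ℝ, R ≤ |t| → M ≤ F t / t ^ 2) :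
    ∃ δ > 0, ∀ S > 0, ∀ w : H1 (Fin N → ℤ), w ≠ 0 →
      (∀ x, S ^ 2 * (w x) ^ 2 < δ ^ 2 * ∑' x, (w x) ^ 2) →
      V0 / 4 * S ^ 2 ≤
        sSup ((fun s : ℝ => PhiF (adjZ N) Vp (fun _ => F) (s • w)) '' Set.Ioi 0) := by
  obtain ⟨δ, hδ, h⟩ := Phi_lower hV0 h0 h1 hFs
  refine ⟨δ, hδ, fun S hS w hw hx => ?_⟩
  have hA := tsum_sq_pos w hw
  set A := ∑' x, (w x) ^ 2 with hAdef
  have hsq : 0 < Real.sqrt A := Real.sqrt_pos.2 hA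
  have hss : (S / Real.sqrt A) ^ 2 = S ^ 2 / A := by rw [div_pow, Real.sq_sqrt hA.le]
  have key := h ((S / Real.sqrt A) • w) (fun x => by
    refine abs_lt_of_sq_lt_sq ?_ hδ.le
    simp only [lp.coeFn_smul, Pi.smul_apply, smul_eq_mul]
    rw [mul_pow, hss, div_mul_eq_mul_div, div_lt_iff₀ hA]
    exact hx x)
  rw [tsum_smul_sq, ← hAdef, hss, div_mul_cancel₀ _ hA.ne'] at key
  exact key.trans (le_csSup (Phi_bdd (fun x => hV0.le.trans (h0 x)) h1 hFs hFn hsuper w hw)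
    ⟨_, div_pos hS hsq, rfl⟩)

theorem sSup_ray_pos {N : ℕ} {Vp : (Fin N → ℤ) → ℝ} {V0 C : ℝ} (hV0 : 0 < V0)
    (h0 : ∀ x, V0 ≤ Vp x) (h1 : ∀ x, Vp x ≤ C) {F : ℝ → ℝ}
    (hFs : ∀ ε > 0, ∃ δ > 0, ∀ t : ℝ, |t| < δ → |F t| ≤ ε * t ^ 2)
    (hFn : ∀ t, 0 ≤ F t)
    (hsuper : ∀ M : ℝ, ∃ R > 0, ∀ t : ℝ, R ≤ |t| → M ≤ F t / t ^ 2) :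
    ∃ m > 0, ∀ w : H1 (Fin N → ℤ), w ≠ 0 → m ≤
        sSup ((fun s : ℝ => PhiF (adjZ N) Vp (fun _ => F) (s • w)) '' Set.Ioi 0) := by
  obtain ⟨δ, hδ, h⟩ := le_sSup_ray hV0 h0 h1 hFs hFn hsuper
  refine ⟨V0 / 4 * (δ / 2) ^ 2, by positivity, fun w hw => h _ (by positivity) w hw fun x => ?_⟩
  have hA := tsum_sq_pos w hw
  have hx : (w x) ^ 2 ≤ ∑' x, (w x) ^ 2 := (h1_summable w).le_tsum x (fun _ _ => sq_nonneg _)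
  have : (δ / 2) ^ 2 * (w x) ^ 2 ≤ (δ / 2) ^ 2 * ∑' x, (w x) ^ 2 := by gcongr
  nlinarith [mul_pos (pow_pos hδ 2) hA]

/-- If the potential well is nontrivial (`V(x₀) < V_∞` somewhere), then the ground state
level `c` of `Φ` is strictly below the ground state level `c_∞` of the limit functional
`Φ_∞`, both characterized by the min-max over rays. -/
theorem stmt19 (N : ℕ) (hN : 1 ≤ N)
    (f : ℝ → ℝ) (hcont : Continuous f)
    (a q : ℝ) (ha : 0 < a) (hq : 2 < q)
    (hgrowth : ∀ t, |f t| ≤ a * (|t| + |t| ^ (q - 1)))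
    (hsmall : ∀ ε > 0, ∃ δ > 0, ∀ t : ℝ, t ≠ 0 → |t| < δ → |f t| ≤ ε * |t|)
    (hmono : StrictMonoOn (fun t => f t / |t|) (Set.Iio 0) ∧
             StrictMonoOn (fun t => f t / |t|) (Set.Ioi 0))
    (F : ℝ → ℝ) (hF : ∀ t, F t = ∫ s in (0:ℝ)..t, f s)
    (hsuper : ∀ M : ℝ, ∃ R > 0, ∀ t : ℝ, R ≤ |t| → M ≤ F t / t ^ 2)
    (Vp : (Fin N → ℤ) → ℝ) (V0 Vinf : ℝ) (hV0 : 0 < V0)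
    (hVlb : ∀ x, V0 ≤ Vp x) (hVub : ∀ x, Vp x ≤ Vinf)
    (x0 : Fin N → ℤ) (hx0 : Vp x0 < Vinf) :
    sInf {y : ℝ | ∃ w : H1 (Fin N → ℤ), w ≠ 0 ∧
        y = sSup ((fun s : ℝ => PhiF (adjZ N) Vp (fun _ => F) (s • w)) '' Set.Ioi 0)} <
      sInf {y : ℝ | ∃ w : H1 (Fin N → ℤ), w ≠ 0 ∧
        y = sSup ((fun s : ℝ =>
          PhiF (adjZ N) (fun _ => Vinf) (fun _ => F) (s • w)) '' Set.Ioi 0)} := by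
  have f0 : f 0 = 0 := by
    have := hgrowth 0
    rw [abs_zero, Real.zero_rpow (by linarith), add_zero, mul_zero] at this
    exact abs_nonpos_iff.1 this
  have hFs := aux_F_bound f f0 hsmall F hF
  have hFn := aux_F_nonneg f hsmall hmono F hF
  have hVn : ∀ x, 0 ≤ Vp x := fun x => hV0.le.trans (hVlb x)
  have hVi : V0 ≤ Vinf := (hVlb x0).trans (hVub x0)
  have hVip : 0 < Vinf := hV0.trans_le hVi
  obtain ⟨m, hm, hmle⟩ := sSup_ray_pos (N := N) hV0 hVlb hVub hFs hFn hsuper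
  obtain ⟨m', hm', hmle'⟩ := sSup_ray_pos (N := N) (Vp := fun _ => Vinf) hVip
    (fun _ => le_rfl) (fun _ => le_rfl) hFs hFn hsuper
  obtain ⟨δ, hδ, hray⟩ := le_sSup_ray (N := N) (Vp := fun _ => Vinf) hVip
    (fun _ => le_rfl) (fun _ => le_rfl) hFs hFn hsuper
  set cset := {y : ℝ | ∃ w : H1 (Fin N → ℤ), w ≠ 0 ∧
        y = sSup ((fun s : ℝ =>
          PhiF (adjZ N) (fun _ => Vinf) (fun _ => F) (s • w)) '' Set.Ioi 0)} with hcset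
  have hne : cset.Nonempty := by
    refine ⟨_, lp.single 2 x0 (1 : ℝ), ?_, rfl⟩
    intro h
    have := congrArg (fun w : H1 (Fin N → ℤ) => w x0) h
    simp at this
  set c := sInf cset with hc
  have hcpos : 0 < c := hm'.trans_le (le_csInf hne (by
    rintro _ ⟨w, hw, rfl⟩; exact hmle' w hw))
  set K : ℝ := Fintype.card (dirSet N) + Vinf / 2 with hK
  have hKpos : 0 < K := by positivity
  obtain ⟨S, hS, hSbig⟩ : ∃ S > 0, c + 1 < Vinf / 4 * S ^ 2 := by
    have ht : Filter.Tendsto (fun S : ℝ => Vinf / 4 * S ^ 2) Filter.atTop Filter.atTop :=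
      (Filter.tendsto_pow_atTop two_ne_zero).const_mul_atTop (by positivity)
    obtain ⟨S, h1, h2⟩ := ((ht.eventually_gt_atTop (c + 1)).and
      (Filter.eventually_gt_atTop 0)).exists
    exact ⟨S, h2, h1⟩
  set κ := Vinf - Vp x0 with hκ
  have hκpos : 0 < κ := sub_pos.2 hx0
  set g : ℝ := (1/2) * (κ * (c / (2 * K) * (δ ^ 2 / S ^ 2))) with hg
  have hgpos : 0 < g := by positivity
  obtain ⟨_, ⟨w, hw, rfl⟩, hlt⟩ := exists_lt_of_csInf_lt hne
    (show sInf cset < c + min 1 (g / 2) by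
      have : 0 < min 1 (g / 2) := by positivity
      linarith)
  have hA := tsum_sq_pos w hw
  obtain ⟨x1, hx1⟩ : ∃ x, δ ^ 2 * ∑' x, (w x) ^ 2 ≤ S ^ 2 * (w x) ^ 2 := by
    by_contra hcon
    push Not at hcon
    have := hray S hS w hw hcon
    have := min_le_left 1 (g / 2)
    linarith
  set w' := shiftH w (x0 - x1) with hw'
  have hx0' : w' x0 = w x1 := by rw [hw', shiftH_apply, sub_sub_cancel]
  have hw1 : w x1 ≠ 0 := by
    intro h
    rw [h] at hx1
    have : 0 < δ ^ 2 * ∑' x, (w x) ^ 2 := by positivity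
    simp at hx1
    linarith
  have hw'0 : w' ≠ 0 := by
    intro h
    apply hw1
    rw [← hx0', h]
    simp
  have hA' : ∑' x, (w' x) ^ 2 = ∑' x, (w x) ^ 2 :=
    (Equiv.subRight (x0 - x1)).tsum_eq (fun x => (w x) ^ 2)
  set A := ∑' x, (w x) ^ 2 with hAdef
  have hlow : BddBelow {y : ℝ | ∃ w : H1 (Fin N → ℤ), w ≠ 0 ∧
        y = sSup ((fun s : ℝ => PhiF (adjZ N) Vp (fun _ => F) (s • w)) '' Set.Ioi 0)} := by
    refine ⟨m, ?_⟩
    rintro _ ⟨w, hw, rfl⟩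
    exact hmle w hw
  refine (csInf_le hlow ⟨w', hw'0, rfl⟩).trans_lt ?_
  have hmax : max (c / 2) (c - g / 2) < c := max_lt (by linarith) (by linarith)
  refine lt_of_le_of_lt (csSup_le ⟨_, 1, Set.mem_Ioi.2 one_pos, rfl⟩ ?_) hmax
  rintro _ ⟨s, hs, rfl⟩
  have hs : 0 < s := hs
  by_cases hcase : s ^ 2 * A ≤ c / (2 * K)
  · refine le_trans ?_ (le_max_left _ _)
    have hu := Phi_upper hVn hVub (F := F) (s • w')
    rw [tsum_smul_sq, hA', ← hK] at hu
    have h4 : 0 ≤ ∑' x, F ((s • w') x) := tsum_nonneg fun _ => hFn _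
    have h5 : K * (s ^ 2 * A) ≤ K * (c / (2 * K)) := by gcongr
    have h6 : K * (c / (2 * K)) = c / 2 := by field_simp
    change PhiF (adjZ N) Vp (fun _ => F) (s • w') ≤ _
    linarith
  · push Not at hcase
    refine le_trans ?_ (le_max_right _ _)
    have hcmp := Phi_compare hVn hVub (F := F) (s • w') x0
    rw [hw', Phi_shift, ← hw', ← hκ] at hcmp
    have hb := le_csSup (Phi_bdd (Vp := fun _ => Vinf) (fun _ => hVip.le) (fun _ => le_rfl)
      hFs hFn hsuper w hw) ⟨s, hs, rfl⟩
    have hgle : g ≤ (1/2) * (κ * ((s • w') x0) ^ 2) := by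
      have e1 : ((s • w') x0) ^ 2 = s ^ 2 * (w x1) ^ 2 := by
        simp only [lp.coeFn_smul, Pi.smul_apply, smul_eq_mul, hx0', mul_pow]
      have e2 : δ ^ 2 / S ^ 2 * A ≤ (w x1) ^ 2 := by
        rw [div_mul_eq_mul_div, div_le_iff₀ (by positivity)]; linarith
      have e3 : c / (2 * K) * (δ ^ 2 / S ^ 2) ≤ s ^ 2 * (w x1) ^ 2 :=
        calc c / (2 * K) * (δ ^ 2 / S ^ 2) ≤ s ^ 2 * A * (δ ^ 2 / S ^ 2) := by gcongr
          _ = s ^ 2 * (δ ^ 2 / S ^ 2 * A) := by ring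
          _ ≤ _ := by gcongr
      rw [e1, hg]
      gcongr
    have := min_le_right 1 (g / 2)
    change PhiF (adjZ N) Vp (fun _ => F) (s • w') ≤ _
    simp only at hb
    linarith
end
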